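/- arXiv:2505.22321 — 3 statements merged into one kernel-verified Lean document; each statement's English description precedes it below -/
import Mathlib

section
/- Let H and G be complex Hilbert spaces, let T and T̃ be linear operators in H, and let Γ0, Γ1 : dom T → G and Γ̃0, Γ̃1 : dom T̃ → G be linear maps such that: (i) the abstract Green identity (Tf, g)_H − (f, T̃g)_H = (Γ1 f, Γ̃0 g)_G − (Γ0 f, Γ̃1 g)_G holds for all f ∈ dom T and g ∈ dom T̃; (ii) Γ0 : dom T → G and Γ̃0 : dom T̃ → G are surjective; (iii) the restrictions A0 := T↾ker Γ0 and Ã0 := T̃↾ker Γ̃0 are densely defined and satisfy A0* = Ã0 and Ã0* = A0; (iv) ker Γ0 ∩ ker Γ1 and ker Γ̃0 ∩ ker Γ̃1 are dense in H. Then the operators S defined by Sf := T̃f on dom S := ker Γ̃0 ∩ ker Γ̃1 and S̃ defined by S̃g := Tg on dom S̃ := ker Γ0 ∩ ker Γ1 are densely defined closed operators in H which form an adjoint pair, one has T* = S and T̃* = S̃ (so {T, T̃} is a core of {S*, S̃*}), and {G, (Γ0, Γ1), (Γ̃0, Γ̃1)} is a generalized boundary triple for {S, S̃}. -/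
/-!
Write `A0` and `At0` for the restrictions of `T` and `Tt` to `ker Γ0` and `ker Γt0`. Both boundary
terms of the Green identity vanish on `dom S = ker Γt0 ∩ ker Γt1`, so `S ≤ T†`. Conversely `A0 ≤ T`
gives `T† ≤ A0† = At0`, so every `g ∈ dom T†` lies in `ker Γt0` and `T† g = Tt g`. The Green
identity then reduces to `(Γ0 f, Γt1 g) = 0` for all `f ∈ dom T`, and since `Γ0` has dense range,
`Γt1 g = 0`. Hence `T† = S`. Conjugating the Green identity exchanges the two sides of the pair, so
that `Tt† = St` as well; in particular `S` and `St` are closed, being adjoints.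
-/

open scoped ComplexInnerProductSpace

noncomputable section

/-- The inner product in the convention of the paper: linear in the *first* argument and
conjugate-linear in the second (the opposite of Mathlib's convention). -/
def pinner {E : Type*} [NormedAddCommGroup E] [InnerProductSpace ℂ E] (x y : E) : ℂ :=
  ⟪y, x⟫

variable {H G : Type*}
  [NormedAddCommGroup H] [InnerProductSpace ℂ H] [CompleteSpace H]
  [NormedAddCommGroup G] [InnerProductSpace ℂ G] [CompleteSpace G]

/-- The restriction of a partially defined linear operator `T` in `H` to a submodule `p` of its
domain, viewed again as a partially defined linear operator in `H`. -/
def LinearPMap.restrictTo (T : H →ₗ.[ℂ] H) (p : Submodule ℂ T.domain) : H →ₗ.[ℂ] H where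
  domain := p.map T.domain.subtype
  toFun := T.toFun ∘ₗ p.subtype ∘ₗ
    (Submodule.equivMapOfInjective T.domain.subtype (Submodule.injective_subtype _)
      p).symm.toLinearMap

/-- `R` is the (everywhere defined, bounded) resolvent of the operator `A` at the point `lam`,
i.e. `R` is a two-sided inverse of `A - lam`. -/
def ResolventAt (A : H →ₗ.[ℂ] H) (lam : ℂ) (R : H →L[ℂ] H) : Prop :=
  (∀ x : A.domain, R (A x - lam • (x : H)) = (x : H)) ∧
  (∀ h : H, ∃ x : A.domain, (x : H) = R h ∧ A x - lam • (x : H) = h)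

/-- `lam` belongs to the resolvent set of `A`: `A - lam` is a bijection of `dom A` onto `H`
with a bounded everywhere defined inverse. -/
def InResolventSet (A : H →ₗ.[ℂ] H) (lam : ℂ) : Prop :=
  ∃ R : H →L[ℂ] H, ResolventAt A lam R

/-- `{G, (Γ0, Γ1), (Γt0, Γt1)}` is a generalized boundary triple for the adjoint pair `{S, St}`
with core `{T, Tt}` of `{S*, St*}`. -/
structure IsGeneralizedBoundaryTriple (S St T Tt : H →ₗ.[ℂ] H)
    (Γ0 Γ1 : T.domain →ₗ[ℂ] G) (Γt0 Γt1 : Tt.domain →ₗ[ℂ] G) : Prop where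
  dense_S : Dense (S.domain : Set H)
  dense_St : Dense (St.domain : Set H)
  closed_S : S.IsClosed
  closed_St : St.IsClosed
  adjoint_pair : ∀ (f : S.domain) (g : St.domain),
    pinner (S f) (g : H) = pinner (f : H) (St g)
  T_le : T ≤ S.adjoint
  Tt_le : Tt ≤ St.adjoint
  T_adjoint : T.adjoint = S
  Tt_adjoint : Tt.adjoint = St
  green : ∀ (f : T.domain) (g : Tt.domain),
    pinner (T f) (g : H) - pinner (f : H) (Tt g)
      = pinner (Γ1 f) (Γt0 g) - pinner (Γ0 f) (Γt1 g)
  surj_Γ0 : Function.Surjective Γ0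
  surj_Γt0 : Function.Surjective Γt0
  A0_adjoint : (T.restrictTo (LinearMap.ker Γ0)).adjoint = Tt.restrictTo (LinearMap.ker Γt0)
  At0_adjoint : (Tt.restrictTo (LinearMap.ker Γt0)).adjoint = T.restrictTo (LinearMap.ker Γ0)

section Restriction

variable {R E F M : Type*} [Ring R] [AddCommGroup E] [Module R E] [AddCommGroup F] [Module R F]
  [AddCommGroup M] [Module R M]

/-- The restriction `T↾ker Γ` of a partially defined operator `T` to the kernel of a boundary map
`Γ` on its domain. A common kernel `ker Γ0 ∩ ker Γ1` is encoded as that of `Γ0.prod Γ1`. -/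
def restrictKer (T : E →ₗ.[R] F) (Γ : T.domain →ₗ[R] M) : E →ₗ.[R] F :=
  T.domRestrict ((LinearMap.ker Γ).map T.domain.subtype)

variable {T : E →ₗ.[R] F} {Γ : T.domain →ₗ[R] M}

theorem restrictKer_le : restrictKer T Γ ≤ T :=
  LinearPMap.domRestrict_le

theorem domain_restrictKer :
    (restrictKer T Γ).domain = (LinearMap.ker Γ).map T.domain.subtype :=
  inf_eq_left.2 (Submodule.map_subtype_le _ _)

theorem coe_mem_domain_restrictKer {z : T.domain} :
    (z : E) ∈ (restrictKer T Γ).domain ↔ Γ z = 0 := by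
  rw [domain_restrictKer]
  exact T.domain.injective_subtype.mem_set_image.trans LinearMap.mem_ker

end Restriction

section RestrictTo

variable {E : Type*} [NormedAddCommGroup E] [InnerProductSpace ℂ E] (T : E →ₗ.[ℂ] E)

theorem restrictTo_le (p : Submodule ℂ T.domain) : T.restrictTo p ≤ T := by
  let e := Submodule.equivMapOfInjective T.domain.subtype T.domain.injective_subtype p
  refine ⟨Submodule.map_subtype_le _ _, fun x y hxy => congrArg T (Subtype.ext ?_)⟩
  exact (congrArg Subtype.val (e.apply_symm_apply x)).trans hxy

theorem restrictTo_ker {M : Type*} [AddCommGroup M] [Module ℂ M] (Γ : T.domain →ₗ[ℂ] M) :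
    T.restrictTo (LinearMap.ker Γ) = restrictKer T Γ :=
  LinearPMap.dExt domain_restrictKer.symm fun x _ hxy =>
    ((restrictTo_le T _).2 (y := ⟨x, (restrictTo_le T _).1 x.2⟩) rfl).trans
      (restrictKer_le.2 hxy.symm).symm

theorem restrictTo_ker_inf_ker {M N : Type*} [AddCommGroup M] [Module ℂ M] [AddCommGroup N]
    [Module ℂ N] (Γ0 : T.domain →ₗ[ℂ] M) (Γ1 : T.domain →ₗ[ℂ] N) :
    T.restrictTo (LinearMap.ker Γ0 ⊓ LinearMap.ker Γ1) = restrictKer T (Γ0.prod Γ1) := by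
  rw [← LinearMap.ker_prod, restrictTo_ker]

end RestrictTo

section Adjoint

open scoped LinearPMap

variable {𝕜 E F B : Type*} [RCLike 𝕜] [NormedAddCommGroup E] [InnerProductSpace 𝕜 E]
  [NormedAddCommGroup F] [InnerProductSpace 𝕜 F] [NormedAddCommGroup B] [InnerProductSpace 𝕜 B]

theorem isFormalAdjoint_of_le {A T : E →ₗ.[𝕜] F} {S : F →ₗ.[𝕜] E} (hAT : A ≤ T)
    (h : T.IsFormalAdjoint S) : A.IsFormalAdjoint S := fun x y => by
  rw [hAT.2 (y := ⟨x, hAT.1 x.2⟩) rfl]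
  exact h ⟨x, hAT.1 x.2⟩ y

theorem adjoint_le_adjoint_of_le [CompleteSpace E] {A T : E →ₗ.[𝕜] F}
    (hA : Dense (A.domain : Set E)) (hAT : A ≤ T) : T† ≤ A† :=
  have hT : Dense (T.domain : Set E) := hA.mono hAT.1
  (isFormalAdjoint_of_le hAT (LinearPMap.adjoint_isFormalAdjoint hT).symm).le_adjoint hA

/-- The abstract Green identity for a pair of operators `T`, `Tt` with boundary maps `(Γ0, Γ1)` and
`(Γt0, Γt1)`. The inner product is Mathlib's, linear in the second argument, so each one has its
arguments in the opposite order to the paper's. -/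
def GreenIdentity (T : E →ₗ.[𝕜] F) (Tt : F →ₗ.[𝕜] E) (Γ0 Γ1 : T.domain →ₗ[𝕜] B)
    (Γt0 Γt1 : Tt.domain →ₗ[𝕜] B) : Prop :=
  ∀ (f : T.domain) (g : Tt.domain),
    inner 𝕜 (g : F) (T f) - inner 𝕜 (Tt g) (f : E)
      = inner 𝕜 (Γt0 g) (Γ1 f) - inner 𝕜 (Γt1 g) (Γ0 f)

namespace GreenIdentity

variable {T : E →ₗ.[𝕜] F} {Tt : F →ₗ.[𝕜] E} {Γ0 Γ1 : T.domain →ₗ[𝕜] B}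
  {Γt0 Γt1 : Tt.domain →ₗ[𝕜] B}

theorem symm (h : GreenIdentity T Tt Γ0 Γ1 Γt0 Γt1) : GreenIdentity Tt T Γt0 Γt1 Γ0 Γ1 :=
  fun g f => by
    have hconj := congrArg (starRingEnd 𝕜) (h f g)
    simp only [map_sub, inner_conj_symm] at hconj
    linear_combination -hconj

theorem isFormalAdjoint_restrictKer_prod (h : GreenIdentity T Tt Γ0 Γ1 Γt0 Γt1) :
    (restrictKer Tt (Γt0.prod Γt1)).IsFormalAdjoint T := by
  intro g f
  obtain ⟨z, hz⟩ : ∃ z : Tt.domain, (z : F) = g := ⟨⟨g, restrictKer_le.1 g.2⟩, rfl⟩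
  obtain ⟨hz0, hz1⟩ : Γt0 z = 0 ∧ Γt1 z = 0 :=
    Prod.mk_eq_zero.1 (coe_mem_domain_restrictKer.1 (hz ▸ g.2))
  have hgreen := h f z
  rw [hz0, hz1, inner_zero_left, inner_zero_left, sub_self, sub_eq_zero] at hgreen
  rw [restrictKer_le.2 hz.symm, ← hz, hgreen]

theorem eq_zero_of_inner_apply_eq (h : GreenIdentity T Tt Γ0 Γ1 Γt0 Γt1) (hΓ0 : DenseRange Γ0)
    {z : Tt.domain} (hz0 : Γt0 z = 0)
    (hz : ∀ f : T.domain, inner 𝕜 (Tt z) (f : E) = inner 𝕜 (z : F) (T f)) : Γt1 z = 0 := by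
  refine hΓ0.eq_zero_of_inner_left 𝕜 fun f => ?_
  simpa only [hz, hz0, sub_self, inner_zero_left, zero_sub, zero_eq_neg] using h f z

theorem adjoint_eq_restrictKer_prod [CompleteSpace E] (h : GreenIdentity T Tt Γ0 Γ1 Γt0 Γt1)
    (hΓ0 : DenseRange Γ0) {A : E →ₗ.[𝕜] F} (hA : Dense (A.domain : Set E)) (hAT : A ≤ T)
    (hadj : A† ≤ restrictKer Tt Γt0) : T† = restrictKer Tt (Γt0.prod Γt1) := by
  have hT : Dense (T.domain : Set E) := hA.mono hAT.1
  have hTA : T† ≤ restrictKer Tt Γt0 := (adjoint_le_adjoint_of_le hA hAT).trans hadj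
  have hST : restrictKer Tt (Γt0.prod Γt1) ≤ T† :=
    h.isFormalAdjoint_restrictKer_prod.symm.le_adjoint hT
  refine (LinearPMap.eq_of_le_of_domain_eq hST (hST.1.antisymm fun g hg => ?_)).symm
  let z : Tt.domain := ⟨g, restrictKer_le.1 (hTA.1 hg)⟩
  have hz0 : Γt0 z = 0 := coe_mem_domain_restrictKer.1 (hTA.1 hg)
  have hTz : T† ⟨g, hg⟩ = Tt z := (hTA.trans restrictKer_le).2 rfl
  have hz1 : Γt1 z = 0 := h.eq_zero_of_inner_apply_eq hΓ0 hz0 fun f => by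
    rw [← hTz]
    exact LinearPMap.adjoint_isFormalAdjoint hT ⟨g, hg⟩ f
  exact (coe_mem_domain_restrictKer (z := z)).2 (Prod.mk_eq_zero.2 ⟨hz0, hz1⟩)

end GreenIdentity

end Adjoint

theorem stmt0_general
    {H G : Type*} [NormedAddCommGroup H] [InnerProductSpace ℂ H] [CompleteSpace H]
    [NormedAddCommGroup G] [InnerProductSpace ℂ G]
    (T Tt : H →ₗ.[ℂ] H)
    (Γ0 Γ1 : T.domain →ₗ[ℂ] G) (Γt0 Γt1 : Tt.domain →ₗ[ℂ] G)
    (green : ∀ (f : T.domain) (g : Tt.domain),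
      pinner (T f) (g : H) - pinner (f : H) (Tt g)
        = pinner (Γ1 f) (Γt0 g) - pinner (Γ0 f) (Γt1 g))
    (surj0 : Function.Surjective Γ0) (surjt0 : Function.Surjective Γt0)
    (hadj : (T.restrictTo (LinearMap.ker Γ0)).adjoint = Tt.restrictTo (LinearMap.ker Γt0))
    (hadjt : (Tt.restrictTo (LinearMap.ker Γt0)).adjoint = T.restrictTo (LinearMap.ker Γ0))
    (hd : Dense (((T.restrictTo (LinearMap.ker Γ0 ⊓ LinearMap.ker Γ1)).domain :
        Submodule ℂ H) : Set H))
    (hdt : Dense (((Tt.restrictTo (LinearMap.ker Γt0 ⊓ LinearMap.ker Γt1)).domain :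
        Submodule ℂ H) : Set H)) :
    IsGeneralizedBoundaryTriple
      (Tt.restrictTo (LinearMap.ker Γt0 ⊓ LinearMap.ker Γt1))
      (T.restrictTo (LinearMap.ker Γ0 ⊓ LinearMap.ker Γ1))
      T Tt Γ0 Γ1 Γt0 Γt1 := by
  have hG : GreenIdentity T Tt Γ0 Γ1 Γt0 Γt1 := green
  have hleT := restrictTo_le T (LinearMap.ker Γ0)
  have hleTt := restrictTo_le Tt (LinearMap.ker Γt0)
  have hdense0 := hd.mono (Submodule.map_mono inf_le_left)
  have hdenset0 := hdt.mono (Submodule.map_mono inf_le_left)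
  have hTadj : T.adjoint = restrictKer Tt (Γt0.prod Γt1) :=
    hG.adjoint_eq_restrictKer_prod surj0.denseRange hdense0 hleT
      (hadj.trans (restrictTo_ker Tt Γt0)).le
  have hTtadj : Tt.adjoint = restrictKer T (Γ0.prod Γ1) :=
    hG.symm.adjoint_eq_restrictKer_prod surjt0.denseRange hdenset0 hleTt
      (hadjt.trans (restrictTo_ker T Γ0)).le
  have hST := hG.isFormalAdjoint_restrictKer_prod
  have hStTt := hG.symm.isFormalAdjoint_restrictKer_prod
  rw [restrictTo_ker_inf_ker] at hd hdt
  rw [restrictTo_ker_inf_ker, restrictTo_ker_inf_ker]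
  exact {
    dense_S := hdt
    dense_St := hd
    closed_S := hTadj ▸ LinearPMap.adjoint_isClosed (hdense0.mono hleT.1)
    closed_St := hTtadj ▸ LinearPMap.adjoint_isClosed (hdenset0.mono hleTt.1)
    adjoint_pair := fun f g => (isFormalAdjoint_of_le restrictKer_le hST.symm g f).symm
    T_le := hST.le_adjoint hdt
    Tt_le := hStTt.le_adjoint hd
    T_adjoint := hTadj
    Tt_adjoint := hTtadj
    green := green
    surj_Γ0 := surj0
    surj_Γt0 := surjt0
    A0_adjoint := hadj
    At0_adjoint := hadjt }

theorem stmt0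
    (T Tt : H →ₗ.[ℂ] H)
    (Γ0 Γ1 : T.domain →ₗ[ℂ] G) (Γt0 Γt1 : Tt.domain →ₗ[ℂ] G)
    (green : ∀ (f : T.domain) (g : Tt.domain),
      pinner (T f) (g : H) - pinner (f : H) (Tt g)
        = pinner (Γ1 f) (Γt0 g) - pinner (Γ0 f) (Γt1 g))
    (surj0 : Function.Surjective Γ0) (surjt0 : Function.Surjective Γt0)
    (hdense0 : Dense (((T.restrictTo (LinearMap.ker Γ0)).domain : Submodule ℂ H) : Set H))
    (hdenset0 : Dense (((Tt.restrictTo (LinearMap.ker Γt0)).domain : Submodule ℂ H) : Set H))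
    (hadj : (T.restrictTo (LinearMap.ker Γ0)).adjoint = Tt.restrictTo (LinearMap.ker Γt0))
    (hadjt : (Tt.restrictTo (LinearMap.ker Γt0)).adjoint = T.restrictTo (LinearMap.ker Γ0))
    (hd : Dense (((T.restrictTo (LinearMap.ker Γ0 ⊓ LinearMap.ker Γ1)).domain :
        Submodule ℂ H) : Set H))
    (hdt : Dense (((Tt.restrictTo (LinearMap.ker Γt0 ⊓ LinearMap.ker Γt1)).domain :
        Submodule ℂ H) : Set H)) :
    IsGeneralizedBoundaryTriple
      (Tt.restrictTo (LinearMap.ker Γt0 ⊓ LinearMap.ker Γt1))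
      (T.restrictTo (LinearMap.ker Γ0 ⊓ LinearMap.ker Γ1))
      T Tt Γ0 Γ1 Γt0 Γt1 :=
  stmt0_general T Tt Γ0 Γ1 Γt0 Γt1 green surj0 surjt0 hadj hadjt hd hdt

end
end

section
/- Let {G, (Γ0, Γ1), (Γ̃0, Γ̃1)} be a generalized boundary triple for the adjoint pair {S, S̃} with core {T, T̃} of {S*, S̃*}, assume ρ(A0) ≠ ∅, and let γ, γ̃ and M, M̃ be the associated γ-fields and Weyl functions. Then for all λ ∈ ρ(A0), μ ∈ ρ(Ã0) and all h, k ∈ G one has (M(λ)h, k)_G = (h, M̃(λ̄)k)_G (that is, M(λ) = M̃(λ̄)* and M̃(μ) = M(μ̄)*), and (M(λ)h, k)_G − (h, M̃(μ)k)_G = (λ − μ̄) (γ(λ)h, γ̃(μ)k)_H. -/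
/-!
Put `f = γ(λ)h` and `g = γ̃(μ)k`, so that `Γ0 f = h`, `Γ1 f = M(λ)h`, `Γt0 g = k` and
`Γt1 g = M̃(μ)k`. Since `T f = λ f` and `Tt g = μ g`, the left-hand side of the abstract Green
identity is `(λ - μ̄) (f, g)`, while its right-hand side is `(M(λ)h, k) - (h, M̃(μ)k)`. At `μ = λ̄`
the factor vanishes, which gives `M(λ) = M̃(λ̄)*`. Conjugating the Green identity exchanges the
roles of `T` and `Tt`, which gives `M̃(μ) = M(μ̄)*`.
-/

open scoped ComplexInnerProductSpace

noncomputable section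

variable {H G : Type*}
  [NormedAddCommGroup H] [InnerProductSpace ℂ H] [CompleteSpace H]
  [NormedAddCommGroup G] [InnerProductSpace ℂ G] [CompleteSpace G]

section Green

variable {E F : Type*}
  [NormedAddCommGroup E] [InnerProductSpace ℂ E]
  [NormedAddCommGroup F] [InnerProductSpace ℂ F]

theorem conj_pinner (x y : E) : (starRingEnd ℂ) (pinner x y) = pinner y x :=
  inner_conj_symm x y

theorem pinner_smul_left (c : ℂ) (x y : E) : pinner (c • x) y = c * pinner x y :=
  inner_smul_right y x c

theorem pinner_smul_right (c : ℂ) (x y : E) :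
    pinner x (c • y) = (starRingEnd ℂ) c * pinner x y :=
  inner_smul_left y x c

/-- The abstract Green identity for operators `T`, `Tt` in `E` and boundary maps `Γ0`, `Γ1` and
`Γt0`, `Γt1` into `F`. It is separated from `IsGeneralizedBoundaryTriple` so that the two operators
can exchange roles; see `AbstractGreenIdentity.symm`. -/
def AbstractGreenIdentity (T Tt : E →ₗ.[ℂ] E)
    (Γ0 Γ1 : T.domain →ₗ[ℂ] F) (Γt0 Γt1 : Tt.domain →ₗ[ℂ] F) : Prop :=
  ∀ (f : T.domain) (g : Tt.domain),
    pinner (T f) (g : E) - pinner (f : E) (Tt g)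
      = pinner (Γ1 f) (Γt0 g) - pinner (Γ0 f) (Γt1 g)

namespace AbstractGreenIdentity

variable {T Tt : E →ₗ.[ℂ] E} {Γ0 Γ1 : T.domain →ₗ[ℂ] F} {Γt0 Γt1 : Tt.domain →ₗ[ℂ] F}

theorem symm (green : AbstractGreenIdentity T Tt Γ0 Γ1 Γt0 Γt1) :
    AbstractGreenIdentity Tt T Γt0 Γt1 Γ0 Γ1 := by
  intro g f
  have conj_green := congrArg (starRingEnd ℂ) (green f g)
  simp only [map_sub, conj_pinner] at conj_green
  linear_combination -conj_green

theorem boundary_sub_eq_of_eigenvectors (green : AbstractGreenIdentity T Tt Γ0 Γ1 Γt0 Γt1)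
    {a b : ℂ} {f : T.domain} {g : Tt.domain}
    (hf : T f = a • (f : E)) (hg : Tt g = b • (g : E)) :
    pinner (Γ1 f) (Γt0 g) - pinner (Γ0 f) (Γt1 g)
      = (a - (starRingEnd ℂ) b) * pinner (f : E) (g : E) :=
  calc
    pinner (Γ1 f) (Γt0 g) - pinner (Γ0 f) (Γt1 g)
      = pinner (T f) (g : E) - pinner (f : E) (Tt g) := (green f g).symm
    _ = a * pinner (f : E) (g : E) - (starRingEnd ℂ) b * pinner (f : E) (g : E) := by
      rw [hf, hg, pinner_smul_left, pinner_smul_right]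
    _ = (a - (starRingEnd ℂ) b) * pinner (f : E) (g : E) := (sub_mul _ _ _).symm

theorem boundary_eq_of_conj_eigenvectors (green : AbstractGreenIdentity T Tt Γ0 Γ1 Γt0 Γt1)
    {a : ℂ} {f : T.domain} {g : Tt.domain}
    (hf : T f = a • (f : E)) (hg : Tt g = (starRingEnd ℂ) a • (g : E)) :
    pinner (Γ1 f) (Γt0 g) = pinner (Γ0 f) (Γt1 g) := by
  rw [← sub_eq_zero, green.boundary_sub_eq_of_eigenvectors hf hg, Complex.conj_conj, sub_self,
    zero_mul]

end AbstractGreenIdentity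

theorem stmt10_general {T Tt : E →ₗ.[ℂ] E}
    {Γ0 Γ1 : T.domain →ₗ[ℂ] F} {Γt0 Γt1 : Tt.domain →ₗ[ℂ] F}
    (green : AbstractGreenIdentity T Tt Γ0 Γ1 Γt0 Γt1) (lam mu : ℂ) :
    (∀ (h k : F) (f : T.domain) (g : Tt.domain),
        T f = lam • (f : E) → Γ0 f = h →
        Tt g = ((starRingEnd ℂ) lam) • (g : E) → Γt0 g = k →
        pinner (Γ1 f) k = pinner h (Γt1 g)) ∧
    (∀ (h k : F) (g : Tt.domain) (f : T.domain),
        Tt g = mu • (g : E) → Γt0 g = k →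
        T f = ((starRingEnd ℂ) mu) • (f : E) → Γ0 f = h →
        pinner (Γt1 g) h = pinner k (Γ1 f)) ∧
    (∀ (h k : F) (f : T.domain) (g : Tt.domain),
        T f = lam • (f : E) → Γ0 f = h →
        Tt g = mu • (g : E) → Γt0 g = k →
        pinner (Γ1 f) k - pinner h (Γt1 g)
          = (lam - (starRingEnd ℂ) mu) * pinner (f : E) (g : E)) := by
  refine ⟨?_, ?_, ?_⟩
  · rintro _ _ f g hf rfl hg rfl
    exact green.boundary_eq_of_conj_eigenvectors hf hg
  · rintro _ _ g f hg rfl hf rfl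
    exact green.symm.boundary_eq_of_conj_eigenvectors hg hf
  · rintro _ _ f g hf rfl hg rfl
    exact green.boundary_sub_eq_of_eigenvectors hf hg

end Green

theorem stmt10
    (S St T Tt : H →ₗ.[ℂ] H)
    (Γ0 Γ1 : T.domain →ₗ[ℂ] G) (Γt0 Γt1 : Tt.domain →ₗ[ℂ] G)
    (hgbt : IsGeneralizedBoundaryTriple S St T Tt Γ0 Γ1 Γt0 Γt1)
    (lam mu : ℂ)
    (hlam : InResolventSet (T.restrictTo (LinearMap.ker Γ0)) lam)
    (hmu : InResolventSet (Tt.restrictTo (LinearMap.ker Γt0)) mu) :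
    (∀ (h k : G) (f : T.domain) (g : Tt.domain),
        T f = lam • (f : H) → Γ0 f = h →
        Tt g = ((starRingEnd ℂ) lam) • (g : H) → Γt0 g = k →
        pinner (Γ1 f) k = pinner h (Γt1 g)) ∧
    (∀ (h k : G) (g : Tt.domain) (f : T.domain),
        Tt g = mu • (g : H) → Γt0 g = k →
        T f = ((starRingEnd ℂ) mu) • (f : H) → Γ0 f = h →
        pinner (Γt1 g) h = pinner k (Γ1 f)) ∧
    (∀ (h k : G) (f : T.domain) (g : Tt.domain),
        T f = lam • (f : H) → Γ0 f = h →
        Tt g = mu • (g : H) → Γt0 g = k →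
        pinner (Γ1 f) k - pinner h (Γt1 g)
          = (lam - (starRingEnd ℂ) mu) * pinner ((f : H)) ((g : H))) :=
  stmt10_general hgbt.green lam mu

end
end

section
/- Let {G, (Γ0, Γ1), (Γ̃0, Γ̃1)} be a generalized boundary triple for the adjoint pair {S, S̃} with core {T, T̃} of {S*, S̃*}, assume ρ(A0) ≠ ∅, let γ and M be the associated γ-field and Weyl function, and let B be a linear operator in G. Let λ ∈ ρ(A0) be such that λ is not an eigenvalue of A_B, and let f ∈ H. Set w := Γ1 (A0 − λ)^{-1} f (which equals γ̃(λ̄)* f). Assume that w ∈ dom B and that there exists h ∈ G with M(λ)h ∈ dom B and h − B M(λ)h = B w. Then f ∈ ran(A_B − λ), and the unique g ∈ dom A_B with (A_B − λ)g = f is given by g = (A0 − λ)^{-1} f + γ(λ)h. -/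
/-!
Membership of `f` in `dom A_B` means that `(Γ1 f, Γ0 f)` lies in the graph of `B`. For
`u = (A0 - λ)⁻¹ f` and `v = γ(λ)h` one has `Γ0 u = 0` and `Γ0 v = h`, so `h - B M(λ)h = B w` is
precisely the condition that `u + v ∈ dom A_B`. Adding `v ∈ ker (T - λ)` to `u` does not change
`(T - λ)u = f`, and `T - λ` is injective on `dom A_B` since `λ` is not an eigenvalue of `A_B`.
-/

open scoped ComplexInnerProductSpace

noncomputable section

variable {H G : Type*}
  [NormedAddCommGroup H] [InnerProductSpace ℂ H] [CompleteSpace H]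
  [NormedAddCommGroup G] [InnerProductSpace ℂ G] [CompleteSpace G]

section BoundaryDomain

variable {R D F : Type*} [Ring R] [AddCommGroup D] [Module R D] [AddCommGroup F] [Module R F]

/-- The domain of `A_B`: all `f` with `Γ1 f ∈ dom B` and `B (Γ1 f) = Γ0 f`. It is encoded as the
preimage of the graph of `B` under `(Γ1, Γ0)`, and as a submodule of `D = dom T` rather than of
the space in which `T` acts. -/
def boundaryDomain (Γ0 Γ1 : D →ₗ[R] F) (B : F →ₗ.[R] F) : Submodule R D :=
  B.graph.comap (Γ1.prod Γ0)

theorem mem_boundaryDomain_iff {Γ0 Γ1 : D →ₗ[R] F} {B : F →ₗ.[R] F} {f : D} :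
    f ∈ boundaryDomain Γ0 Γ1 B ↔ ∃ hb : Γ1 f ∈ B.domain, B ⟨Γ1 f, hb⟩ = Γ0 f := by
  simp [boundaryDomain, LinearPMap.mem_graph_iff]

theorem add_mem_boundaryDomain_iff {Γ0 Γ1 : D →ₗ[R] F} {B : F →ₗ.[R] F} {u v : D}
    (hu0 : Γ0 u = 0) (hu : Γ1 u ∈ B.domain) (hv : Γ1 v ∈ B.domain) :
    u + v ∈ boundaryDomain Γ0 Γ1 B ↔ Γ0 v - B ⟨Γ1 v, hv⟩ = B ⟨Γ1 u, hu⟩ := by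
  have hΓ1 : Γ1 (u + v) = ((⟨Γ1 u, hu⟩ + ⟨Γ1 v, hv⟩ : B.domain) : F) := map_add Γ1 u v
  simp only [mem_boundaryDomain_iff, hΓ1, Subtype.coe_eta, SetLike.coe_mem, exists_true_left,
    LinearPMap.map_add, map_add, hu0, zero_add]
  rw [sub_eq_iff_eq_add, eq_comm]

end BoundaryDomain

section ShiftedMap

variable {R E : Type*} [CommRing R] [AddCommGroup E] [Module R E]

/-- The operator `T - λ`, as an everywhere defined linear map on the module `dom T`. -/
def shiftedMap (T : E →ₗ.[R] E) (lam : R) : T.domain →ₗ[R] E :=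
  T.toFun - lam • T.domain.subtype

theorem shiftedMap_apply (T : E →ₗ.[R] E) (lam : R) (x : T.domain) :
    shiftedMap T lam x = T x - lam • (x : E) :=
  rfl

theorem mem_ker_shiftedMap {T : E →ₗ.[R] E} {lam : R} {x : T.domain} :
    x ∈ LinearMap.ker (shiftedMap T lam) ↔ T x = lam • (x : E) := by
  rw [LinearMap.mem_ker, shiftedMap_apply, sub_eq_zero]

theorem injOn_shiftedMap_iff_not_exists_eigenvector {T : E →ₗ.[R] E} {lam : R}
    {p : Submodule R T.domain} :
    Set.InjOn (shiftedMap T lam) p ↔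
      ¬ ∃ f : T.domain, f ≠ 0 ∧ T f = lam • (f : E) ∧ f ∈ p := by
  rw [← LinearMap.disjoint_ker_iff_injOn, Submodule.disjoint_def]
  simp only [mem_ker_shiftedMap]
  grind

end ShiftedMap

theorem stmt13_general {R E F : Type*} [CommRing R] [AddCommGroup E] [Module R E]
    [AddCommGroup F] [Module R F]
    (T : E →ₗ.[R] E) (Γ0 Γ1 : T.domain →ₗ[R] F) (B : F →ₗ.[R] F) (lam : R)
    (hnotev : ¬ ∃ f : T.domain, f ≠ 0 ∧ T f = lam • (f : E) ∧ f ∈ boundaryDomain Γ0 Γ1 B)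
    (f : E) (u : T.domain) (hu0 : Γ0 u = 0) (huf : T u - lam • (u : E) = f)
    (hw : Γ1 u ∈ B.domain)
    (h : F) (v : T.domain) (hv : T v = lam • (v : E)) (hv0 : Γ0 v = h) (hm : Γ1 v ∈ B.domain)
    (hh : h - B ⟨Γ1 v, hm⟩ = B ⟨Γ1 u, hw⟩) :
    u + v ∈ boundaryDomain Γ0 Γ1 B ∧
    T (u + v) - lam • ((u + v : T.domain) : E) = f ∧
    ∀ g' ∈ boundaryDomain Γ0 Γ1 B, T g' - lam • (g' : E) = f → g' = u + v := by
  simp only [← shiftedMap_apply] at huf ⊢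
  have hmem : u + v ∈ boundaryDomain Γ0 Γ1 B :=
    (add_mem_boundaryDomain_iff hu0 hw hm).mpr (hv0.symm ▸ hh)
  have hsolves : shiftedMap T lam (u + v) = f := by
    rw [map_add, LinearMap.mem_ker.mp (mem_ker_shiftedMap.mpr hv), add_zero, huf]
  have hinj : Set.InjOn (shiftedMap T lam) (boundaryDomain Γ0 Γ1 B) :=
    injOn_shiftedMap_iff_not_exists_eigenvector.mpr hnotev
  exact ⟨hmem, hsolves, fun g' hg' hg'f => hinj hg' hmem (hg'f.trans hsolves.symm)⟩

theorem stmt13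
    (S St T Tt : H →ₗ.[ℂ] H)
    (Γ0 Γ1 : T.domain →ₗ[ℂ] G) (Γt0 Γt1 : Tt.domain →ₗ[ℂ] G)
    (hgbt : IsGeneralizedBoundaryTriple S St T Tt Γ0 Γ1 Γt0 Γt1)
    (B : G →ₗ.[ℂ] G) (lam : ℂ)
    (hlam : InResolventSet (T.restrictTo (LinearMap.ker Γ0)) lam)
    (gam : G → T.domain)
    (hgam : ∀ k : G, T (gam k) = lam • ((gam k : H)) ∧ Γ0 (gam k) = k)
    (hnotev : ¬ ∃ f : T.domain, f ≠ 0 ∧ T f = lam • (f : H) ∧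
      ∃ hb : Γ1 f ∈ B.domain, B ⟨Γ1 f, hb⟩ = Γ0 f)
    (f : H) (u : T.domain) (hu0 : Γ0 u = 0) (huf : T u - lam • (u : H) = f)
    (hw : Γ1 u ∈ B.domain)
    (h : G) (hm : Γ1 (gam h) ∈ B.domain)
    (hh : h - B ⟨Γ1 (gam h), hm⟩ = B ⟨Γ1 u, hw⟩) :
    (∃ hb : Γ1 (u + gam h) ∈ B.domain, B ⟨Γ1 (u + gam h), hb⟩ = Γ0 (u + gam h)) ∧
    T (u + gam h) - lam • ((u + gam h : T.domain) : H) = f ∧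
    (∀ g' : T.domain, (∃ hb : Γ1 g' ∈ B.domain, B ⟨Γ1 g', hb⟩ = Γ0 g') →
      T g' - lam • (g' : H) = f → g' = u + gam h) := by
  simp only [← mem_boundaryDomain_iff] at hnotev ⊢
  exact stmt13_general T Γ0 Γ1 B lam hnotev f u hu0 huf hw h (gam h) (hgam h).1 (hgam h).2 hm hh

end
end
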